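/- Let s ∈ (1/2,1), let Ω ⊂ ℝ^n be a bounded domain and let W be the double well potential. Then for every k ∈ ℕ there exists a constant c_k > 0 such that for every ε ∈ (0,1) and every f ∈ S_ε^k one has F_ε(f) = (ε^{2s−1}/2) ∫_Ω∫_Ω |f(x)−f(y)|²/|x−y|^{n+2s} dx dy + ε^{−1} ∫_Ω W(f) dx ≤ c_k; in particular the bound c_k is independent of ε. -/

import Mathlib

open MeasureTheory Real Set
open scoped ENNReal

noncomputable section

/-- The double well potential: an even nonnegative `C²` function vanishing exactly at `±1`,
positive on `(-1,1)`, with nondegenerate minima at `±1`. -/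
def IsDoubleWell (W : ℝ → ℝ) : Prop :=
  ContDiff ℝ 2 W ∧ (∀ t, W (-t) = W t) ∧ (∀ t, 0 ≤ W t) ∧
  W 1 = 0 ∧ W (-1) = 0 ∧ (∀ t ∈ Set.Ioo (-1 : ℝ) 1, 0 < W t) ∧
  deriv W 1 = 0 ∧ deriv W (-1) = 0 ∧
  0 < iteratedDeriv 2 W 1 ∧ 0 < iteratedDeriv 2 W (-1)

/-- The Gagliardo double integral `∫_Ω ∫_Ω |u(x)-u(y)|² / |x-y|^{n+2s} dx dy`. -/
def gagliardo (n : ℕ) (s : ℝ) (Ω : Set (EuclideanSpace ℝ (Fin n)))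
    (u : EuclideanSpace ℝ (Fin n) → ℝ) : ℝ≥0∞ :=
  ∫⁻ x in Ω, ∫⁻ y in Ω, ENNReal.ofReal (|u x - u y| ^ 2 / dist x y ^ ((n : ℝ) + 2 * s))

/-- The potential term `∫_Ω W(u) dx`. -/
def potentialTerm (n : ℕ) (Ω : Set (EuclideanSpace ℝ (Fin n))) (W : ℝ → ℝ)
    (u : EuclideanSpace ℝ (Fin n) → ℝ) : ℝ≥0∞ :=
  ∫⁻ x in Ω, ENNReal.ofReal (W (u x))

/-- The cosine polynomial `φ_λ(t) = ∑_{m=0}^k λ⁽ᵐ⁾ cos(m t)`. -/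
def cosPoly (k : ℕ) (lam : EuclideanSpace ℝ (Fin (k + 1))) (t : ℝ) : ℝ :=
  ∑ m : Fin (k + 1), lam m * Real.cos ((m : ℕ) * t)

/-- The averaged sign `L_ε(φ_λ)(t) = (1/(2ε)) ∫_{t-ε}^{t+ε} φ_λ(τ)/|φ_λ(τ)| dτ`. -/
def Lavg (k : ℕ) (ε : ℝ) (lam : EuclideanSpace ℝ (Fin (k + 1))) (t : ℝ) : ℝ :=
  (1 / (2 * ε)) * ∫ τ in (t - ε)..(t + ε), cosPoly k lam τ / |cosPoly k lam τ|

/-- The family `S_ε^k = { L_ε(φ_λ) ∘ P₁ : |λ| = 1 }` of functions on `ℝ^n`. -/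
def Sset (n k : ℕ) (hn : 0 < n) (ε : ℝ) : Set (EuclideanSpace ℝ (Fin n) → ℝ) :=
  {f | ∃ lam : EuclideanSpace ℝ (Fin (k + 1)), ‖lam‖ = 1 ∧
    ∀ x, f x = Lavg k ε lam (x ⟨0, hn⟩)}


open Polynomial in
/-- The zeros of a nontrivial cosine polynomial in a bounded interval are covered by a finite set
whose cardinality depends only on the degree and the interval. -/
lemma exists_finset_zeros_cosPoly (k : ℕ) (R : ℝ) :
    ∃ N : ℕ, ∀ lam : EuclideanSpace ℝ (Fin (k + 1)), lam ≠ 0 →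
      ∃ Z : Finset ℝ, Z.card ≤ N ∧ ∀ t ∈ Icc (-R) R, cosPoly k lam t = 0 → t ∈ Z := by
  refine ⟨(Finset.Icc ⌊-R / π⌋ ⌊R / π⌋).card * k, fun lam hlam => ?_⟩
  set p : ℝ[X] := ∑ m : Fin (k + 1), lam m • Chebyshev.T ℝ ((m : ℕ) : ℤ) with hp
  have hp0 : p ≠ 0 := by
    intro h0
    let S : Polynomial.Sequence ℝ :=
      ⟨fun i => Chebyshev.T ℝ (i : ℤ), fun i => by simp⟩
    have hli : LinearIndependent ℝ (fun m : Fin (k + 1) => S (m : ℕ)) :=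
      S.linearIndependent.comp _ Fin.val_injective
    refine hlam (PiLp.ext fun m => ?_)
    exact Fintype.linearIndependent_iff.1 hli lam h0 m
  have hdeg : p.natDegree ≤ k := by
    refine natDegree_sum_le_of_forall_le _ _ fun m _ => (natDegree_smul_le _ _).trans ?_
    simpa using Nat.lt_succ_iff.1 m.2
  have heval : ∀ t, p.eval (cos t) = cosPoly k lam t := by
    intro t
    simp only [hp, eval_finsetSum, eval_smul, Chebyshev.T_real_cos, cosPoly, smul_eq_mul]
    simp
  refine ⟨(Finset.Icc ⌊-R / π⌋ ⌊R / π⌋ ×ˢ p.roots.toFinset).image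
    (fun q => q.1 * π + arccos ((-1) ^ q.1 * q.2)), ?_, fun t ht h0 => ?_⟩
  · refine Finset.card_image_le.trans ?_
    rw [Finset.card_product]
    exact Nat.mul_le_mul_left _
      ((Multiset.toFinset_card_le _).trans ((card_roots' p).trans hdeg))
  · have hπ := pi_pos
    have h1 : (⌊t / π⌋ : ℝ) * π ≤ t := (le_div_iff₀ hπ).1 (Int.floor_le _)
    have h2 : t < (⌊t / π⌋ + 1) * π := (div_lt_iff₀ hπ).1 (Int.lt_floor_add_one _)
    rw [Finset.mem_image]
    refine ⟨(⌊t / π⌋, cos t), ?_, ?_⟩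
    · rw [Finset.mem_product, Finset.mem_Icc, Multiset.mem_toFinset, mem_roots hp0, IsRoot.def,
        heval, h0]
      refine ⟨⟨Int.floor_mono ?_, Int.floor_mono ?_⟩, rfl⟩
      · gcongr; exact ht.1
      · gcongr; exact ht.2
    · have hc : (-1 : ℝ) ^ ⌊t / π⌋ * cos t = cos (t - ⌊t / π⌋ * π) := by
        rw [cos_sub_int_mul_pi]
      dsimp only
      rw [hc, arccos_cos (by linarith) (by linarith)]
      ring

lemma continuous_cosPoly (k : ℕ) (lam : EuclideanSpace ℝ (Fin (k + 1))) :
    Continuous (cosPoly k lam) := by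
  unfold cosPoly
  fun_prop

lemma abs_div_abs_self_le_one (x : ℝ) : |x / abs x| ≤ 1 := by
  rw [abs_div, abs_abs]
  exact div_self_le_one _

lemma intervalIntegrable_sign_cosPoly (k : ℕ) (lam : EuclideanSpace ℝ (Fin (k + 1))) (a b : ℝ) :
    IntervalIntegrable (fun τ => cosPoly k lam τ / |cosPoly k lam τ|) volume a b := by
  have hm : Measurable (cosPoly k lam) := (continuous_cosPoly k lam).measurable
  refine (intervalIntegrable_const (c := (1 : ℝ))).mono_fun
    (hm.div (measurable_abs.comp hm)).aestronglyMeasurable (Filter.Eventually.of_forall fun τ => ?_)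
  simpa only [Real.norm_eq_abs, abs_one] using abs_div_abs_self_le_one (cosPoly k lam τ)

lemma abs_Lavg_le_one (k : ℕ) {ε : ℝ} (hε : 0 < ε) (lam : EuclideanSpace ℝ (Fin (k + 1)))
    (t : ℝ) : |Lavg k ε lam t| ≤ 1 := by
  have h := intervalIntegral.norm_integral_le_of_norm_le_const (a := t - ε) (b := t + ε) (C := 1)
    (f := fun τ => cosPoly k lam τ / |cosPoly k lam τ|)
    (fun τ _ => abs_div_abs_self_le_one _)
  rw [Real.norm_eq_abs, show t + ε - (t - ε) = 2 * ε by ring, abs_of_pos (by positivity : 0 < 2 * ε),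
    one_mul] at h
  rw [Lavg, abs_mul, abs_of_pos (by positivity : 0 < 1 / (2 * ε)), one_div,
    inv_mul_le_iff₀ (by positivity)]
  simpa using h

lemma abs_Lavg_sub_le (k : ℕ) {ε : ℝ} (hε : 0 < ε) (lam : EuclideanSpace ℝ (Fin (k + 1)))
    (a b : ℝ) : |Lavg k ε lam a - Lavg k ε lam b| ≤ |a - b| / ε := by
  have hi := intervalIntegrable_sign_cosPoly k lam
  have hb (c d : ℝ) := intervalIntegral.norm_integral_le_of_norm_le_const (a := c) (b := d) (C := 1)
    (f := fun τ => cosPoly k lam τ / |cosPoly k lam τ|)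
    (fun τ _ => abs_div_abs_self_le_one _)
  have h1 := hb (a - ε) (b - ε)
  have h2 := hb (a + ε) (b + ε)
  rw [Real.norm_eq_abs, one_mul, abs_sub_comm] at h1 h2
  rw [show a - ε - (b - ε) = a - b by ring] at h1
  rw [show a + ε - (b + ε) = a - b by ring] at h2
  rw [Lavg, Lavg, ← mul_sub, intervalIntegral.integral_interval_sub_interval_comm (hi _ _) (hi _ _)
    (hi _ _), abs_mul, abs_of_pos (by positivity : 0 < 1 / (2 * ε)), one_div,
    inv_mul_le_iff₀ (by positivity)]
  refine (abs_sub _ _).trans ((add_le_add h1 h2).trans (le_of_eq ?_))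
  field_simp
  ring

/-- Away from the zeros of `cosPoly k lam`, the averaged sign is constant and equal to `±1`. -/
lemma Lavg_eq_of_no_zero (k : ℕ) {ε : ℝ} (hε : 0 < ε) (lam : EuclideanSpace ℝ (Fin (k + 1)))
    {c d : ℝ} (h : ∀ τ ∈ Icc (c - ε) (d + ε), cosPoly k lam τ ≠ 0) :
    ∃ σ : ℝ, (σ = 1 ∨ σ = -1) ∧ ∀ t ∈ Icc c d, Lavg k ε lam t = σ := by
  obtain ⟨σ, hσ, hc⟩ : ∃ σ : ℝ, (σ = 1 ∨ σ = -1) ∧ ∀ τ ∈ Icc (c - ε) (d + ε),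
      cosPoly k lam τ / |cosPoly k lam τ| = σ := by
    by_cases hpos : ∀ τ ∈ Icc (c - ε) (d + ε), 0 < cosPoly k lam τ
    · refine ⟨1, Or.inl rfl, fun τ hτ => ?_⟩
      rw [abs_of_pos (hpos τ hτ), div_self (h τ hτ)]
    · push Not at hpos
      obtain ⟨τ₀, hτ₀, hneg⟩ := hpos
      refine ⟨-1, Or.inr rfl, fun τ hτ => ?_⟩
      have hτneg : cosPoly k lam τ < 0 := by
        by_contra! hcon
        obtain ⟨z, hz, hz0⟩ := isPreconnected_Icc.intermediate_value hτ₀ hτ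
          (continuous_cosPoly k lam).continuousOn ⟨hneg, hcon⟩
        exact h z hz hz0
      rw [abs_of_neg hτneg, div_neg, div_self (h τ hτ)]
  refine ⟨σ, hσ, fun t ht => ?_⟩
  have : ∫ τ in (t - ε)..(t + ε), cosPoly k lam τ / |cosPoly k lam τ|
      = ∫ τ in (t - ε)..(t + ε), σ := by
    refine intervalIntegral.integral_congr fun τ hτ => hc τ ?_
    rw [uIcc_of_le (by linarith)] at hτ
    exact ⟨by linarith [hτ.1, ht.1], by linarith [hτ.2, ht.2]⟩
  rw [Lavg, this, intervalIntegral.integral_const, smul_eq_mul]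
  field_simp
  ring

lemma exists_zero_of_Lavg_ne (k : ℕ) {ε : ℝ} (hε : 0 < ε) (lam : EuclideanSpace ℝ (Fin (k + 1)))
    {a b : ℝ} (h : Lavg k ε lam a ≠ Lavg k ε lam b) :
    ∃ z ∈ Icc (min a b - ε) (max a b + ε), cosPoly k lam z = 0 := by
  by_contra! hcon
  obtain ⟨σ, -, hσ⟩ := Lavg_eq_of_no_zero k hε lam hcon
  exact h ((hσ a ⟨min_le_left _ _, le_max_left _ _⟩).trans
    (hσ b ⟨min_le_right _ _, le_max_right _ _⟩).symm)

lemma exists_zero_of_abs_Lavg_ne_one (k : ℕ) {ε : ℝ} (hε : 0 < ε)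
    (lam : EuclideanSpace ℝ (Fin (k + 1))) {a : ℝ} (h₁ : Lavg k ε lam a ≠ 1)
    (h₂ : Lavg k ε lam a ≠ -1) : ∃ z ∈ Icc (a - ε) (a + ε), cosPoly k lam z = 0 := by
  by_contra! hcon
  obtain ⟨σ, hσ, hσa⟩ := Lavg_eq_of_no_zero k hε lam hcon
  rw [hσa a ⟨le_rfl, le_rfl⟩] at h₁ h₂
  exact hσ.elim h₁ h₂

/-- The volume of a slab of width `2 * δ` inside a ball is at most linear in `δ`. -/
lemma volume_slab_le {n : ℕ} (i : Fin n) (R z δ : ℝ) :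
    volume (Metric.closedBall (0 : EuclideanSpace ℝ (Fin n)) R ∩ {x | |x i - z| ≤ δ})
      ≤ ENNReal.ofReal (2 * R) ^ (n - 1) * ENNReal.ofReal (2 * δ) := by
  have hsub : Metric.closedBall (0 : EuclideanSpace ℝ (Fin n)) R ∩ {x | |x i - z| ≤ δ} ⊆
      (WithLp.ofLp : EuclideanSpace ℝ (Fin n) → Fin n → ℝ) ⁻¹'
        (Set.univ.pi fun j => if j = i then Icc (z - δ) (z + δ) else Icc (-R) R) := by
    rintro x ⟨hx, hxz⟩ j -
    have hj : |x j| ≤ R := (PiLp.norm_apply_le x j).trans (mem_closedBall_zero_iff.1 hx)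
    by_cases hji : j = i
    · subst hji
      have := abs_le.1 (show |x j - z| ≤ δ from hxz)
      simp only [if_true]
      exact ⟨by linarith, by linarith⟩
    · simpa [hji] using abs_le.1 hj
  refine (measure_mono hsub).trans ?_
  rw [(PiLp.volume_preserving_ofLp (Fin n)).measure_preimage
    (MeasurableSet.univ_pi fun j => by split_ifs <;> exact measurableSet_Icc).nullMeasurableSet,
    volume_pi_pi, ← Finset.prod_erase_mul _ _ (Finset.mem_univ i)]
  refine mul_le_mul' (le_of_eq ?_) (le_of_eq ?_)
  · rw [Finset.prod_congr rfl (g := fun _ => ENNReal.ofReal (2 * R))]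
    · simp
    · intro j hj
      rw [if_neg (Finset.ne_of_mem_erase hj), Real.volume_Icc]
      ring_nf
  · rw [if_pos rfl, Real.volume_Icc]
    ring_nf

/-- The radial integral which controls the Gagliardo energy of a transition layer of width `ε`. -/
lemma exists_lintegral_kernel_le {n : ℕ} (hn : 0 < n) {s : ℝ} (hs : s ∈ Ioo (1 / 2 : ℝ) 1) :
    ∃ C : ℝ, 0 ≤ C ∧ ∀ ε : ℝ, 0 < ε →
      ∫⁻ h : EuclideanSpace ℝ (Fin n),
        ENNReal.ofReal (min 2 (‖h‖ / ε) ^ 2 / ‖h‖ ^ ((n : ℝ) + 2 * s) * (‖h‖ + ε))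
        ≤ ENNReal.ofReal (C * ε ^ (1 - 2 * s)) := by
  have : Nontrivial (EuclideanSpace ℝ (Fin n)) := by
    have : Nonempty (Fin n) := ⟨⟨0, hn⟩⟩
    infer_instance
  obtain ⟨hs1, hs2⟩ := hs
  set V : ℝ := volume.real (Metric.ball (0 : EuclideanSpace ℝ (Fin n)) 1)
  refine ⟨n * (V * (2 / (2 - 2 * s) + 8 / (2 * s - 1))), ?_, fun ε hε => ?_⟩
  · have : 0 ≤ V := measureReal_nonneg
    have : 0 < 2 - 2 * s := by linarith
    have : 0 < 2 * s - 1 := by linarith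
    positivity
  set F : ℝ → ℝ := fun r =>
    if r ≤ ε then 2 / ε * r ^ (2 - n - 2 * s) else 8 * r ^ (1 - n - 2 * s) with hF
  have hFnn : ∀ r, 0 ≤ r → 0 ≤ F r := by
    intro r hr
    simp only [hF]
    split_ifs <;> positivity
  have hle : ∀ r, 0 ≤ r →
      min 2 (r / ε) ^ 2 / r ^ ((n : ℝ) + 2 * s) * (r + ε) ≤ F r := by
    intro r hr
    rcases hr.eq_or_lt with rfl | hr
    · simpa using hFnn 0 le_rfl
    simp only [hF]
    split_ifs with h
    · have e : r ^ (2 - n - 2 * s) = r ^ 2 / r ^ ((n : ℝ) + 2 * s) := by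
        rw [← rpow_two, ← rpow_sub hr]; ring_nf
      calc min 2 (r / ε) ^ 2 / r ^ ((n : ℝ) + 2 * s) * (r + ε)
          ≤ (r / ε) ^ 2 / r ^ ((n : ℝ) + 2 * s) * (ε + ε) := by
            gcongr; exact min_le_right _ _
        _ = _ := by rw [e]; field_simp; ring
    · push Not at h
      have e : r ^ (1 - n - 2 * s) = r / r ^ ((n : ℝ) + 2 * s) := by
        nth_rewrite 2 [← rpow_one r]
        rw [← rpow_sub hr]; ring_nf
      calc min 2 (r / ε) ^ 2 / r ^ ((n : ℝ) + 2 * s) * (r + ε)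
          ≤ 2 ^ 2 / r ^ ((n : ℝ) + 2 * s) * (r + r) := by
            gcongr; exact min_le_left _ _
        _ = _ := by rw [e]; ring
  have hpow : ∀ r : ℝ, 0 < r → ∀ a : ℝ, r ^ (n - 1) * r ^ (a - n - 2 * s) = r ^ (a - 1 - 2 * s) := by
    intro r hr a
    rw [← rpow_natCast, ← rpow_add hr, Nat.cast_pred hn]
    ring_nf
  have h1 : EqOn (fun r : ℝ => r ^ (n - 1) • F r) (fun r => 2 / ε * r ^ (1 - 2 * s)) (Ioc 0 ε) := by
    intro r hr
    simp only [hF, if_pos hr.2, smul_eq_mul]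
    rw [mul_left_comm, hpow r hr.1]
    norm_num
  have h2 : EqOn (fun r : ℝ => r ^ (n - 1) • F r) (fun r => 8 * r ^ (-2 * s)) (Ioi ε) := by
    intro r hr
    simp only [hF, if_neg (not_le.2 (mem_Ioi.1 hr)), smul_eq_mul]
    rw [mul_left_comm, hpow r (hε.trans hr)]
    norm_num
  have hi1 : IntegrableOn (fun r : ℝ => r ^ (n - 1) • F r) (Ioc 0 ε) := by
    rw [integrableOn_congr_fun h1 measurableSet_Ioc]
    refine Integrable.const_mul ?_ _
    exact (intervalIntegrable_iff_integrableOn_Ioc_of_le hε.le).1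
      (intervalIntegral.intervalIntegrable_rpow' (by linarith))
  have hi2 : IntegrableOn (fun r : ℝ => r ^ (n - 1) • F r) (Ioi ε) := by
    rw [integrableOn_congr_fun h2 measurableSet_Ioi]
    exact Integrable.const_mul (integrableOn_Ioi_rpow_of_lt (by linarith) hε) _
  have hint : Integrable (fun h : EuclideanSpace ℝ (Fin n) => F ‖h‖) := by
    rw [integrable_fun_norm_addHaar, ← Ioc_union_Ioi_eq_Ioi hε.le, finrank_euclideanSpace_fin]
    exact hi1.union hi2
  have hval : ∫ h : EuclideanSpace ℝ (Fin n), F ‖h‖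
      = n * (V * (2 / (2 - 2 * s) + 8 / (2 * s - 1))) * ε ^ (1 - 2 * s) := by
    rw [integral_fun_norm_addHaar, finrank_euclideanSpace_fin, ← Ioc_union_Ioi_eq_Ioi hε.le,
      setIntegral_union (Ioc_disjoint_Ioi le_rfl) measurableSet_Ioi hi1 hi2,
      setIntegral_congr_fun measurableSet_Ioc h1, setIntegral_congr_fun measurableSet_Ioi h2,
      integral_const_mul, integral_const_mul, integral_Ioi_rpow_of_lt (by linarith) hε,
      ← intervalIntegral.integral_of_le hε.le, integral_rpow (Or.inl (by linarith)),
      zero_rpow (by linarith), show (1 - 2 * s + 1) = (1 - 2 * s) + 1 by ring, rpow_add_one hε.ne',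
      show (-2 * s + 1) = 1 - 2 * s by ring]
    have : 2 - 2 * s ≠ 0 := by linarith
    have : 2 * s - 1 ≠ 0 := by linarith
    have : 1 - 2 * s ≠ 0 := by linarith
    have e1 : 1 - 2 * s + 1 = 2 - 2 * s := by ring
    have e2 : 1 - 2 * s = - (2 * s - 1) := by ring
    generalize hX : ε ^ (1 - 2 * s) = X
    rw [e1, e2, nsmul_eq_mul, smul_eq_mul]
    field_simp
    ring
  rw [← hval, ofReal_integral_eq_lintegral_ofReal hint
    (Filter.Eventually.of_forall fun h => hFnn _ (norm_nonneg h))]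
  exact lintegral_mono fun h => ENNReal.ofReal_le_ofReal (hle _ (norm_nonneg h))

/-- Gagliardo energy bound for a function of one coordinate whose increments are at most
`min 2 (|x - y| / ε)` and vanish unless one of finitely many hyperplanes is close. -/
lemma gagliardo_le_of_transition {n : ℕ} (i : Fin n) (s : ℝ) {Ω : Set (EuclideanSpace ℝ (Fin n))}
    (hΩ : MeasurableSet Ω) {R : ℝ} (hR : Ω ⊆ Metric.closedBall 0 R) {ε : ℝ} (Z : Finset ℝ)
    (f : EuclideanSpace ℝ (Fin n) → ℝ)
    (hf : ∀ x y, |f x - f y| ≤ min 2 (‖y - x‖ / ε))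
    (hZ : ∀ x ∈ Ω, ∀ y ∈ Ω, f x ≠ f y → ∃ z ∈ Z, |x i - z| ≤ ‖y - x‖ + ε) :
    gagliardo n s Ω f ≤ Z.card * (2 * ENNReal.ofReal (2 * R) ^ (n - 1) *
      ∫⁻ h : EuclideanSpace ℝ (Fin n),
        ENNReal.ofReal (min 2 (‖h‖ / ε) ^ 2 / ‖h‖ ^ ((n : ℝ) + 2 * s) * (‖h‖ + ε))) := by
  set κ : EuclideanSpace ℝ (Fin n) → ℝ≥0∞ := fun h =>
    ENNReal.ofReal (min 2 (‖h‖ / ε) ^ 2 / ‖h‖ ^ ((n : ℝ) + 2 * s)) with hκ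
  have hκm : Measurable κ := by fun_prop
  let A : ℝ → Set (EuclideanSpace ℝ (Fin n) × EuclideanSpace ℝ (Fin n)) :=
    fun z => {q | |q.1 i - z| ≤ ‖q.2‖ + ε}
  have hA : ∀ z, MeasurableSet (A z) := fun z =>
    measurableSet_le (by fun_prop) (by fun_prop)
  let G : ℝ → EuclideanSpace ℝ (Fin n) → EuclideanSpace ℝ (Fin n) → ℝ≥0∞ :=
    fun z x h => (A z).indicator (fun q => κ q.2) (x, h)
  have hG : ∀ z, Measurable (Function.uncurry (G z)) := fun z =>
    (hκm.comp measurable_snd).indicator (hA z)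
  have hpt : ∀ x ∈ Ω, ∀ y ∈ Ω,
      ENNReal.ofReal (|f x - f y| ^ 2 / dist x y ^ ((n : ℝ) + 2 * s))
        ≤ ∑ z ∈ Z, G z x (y - x) := by
    intro x hx y hy
    by_cases hxy : f x = f y
    · simp [hxy]
    obtain ⟨z, hz, hxz⟩ := hZ x hx y hy hxy
    refine le_trans ?_ (Finset.single_le_sum (fun _ _ => zero_le) hz)
    have hmem : (x, y - x) ∈ A z := hxz
    simp only [G, indicator_of_mem hmem, hκ]
    rw [dist_comm, dist_eq_norm]
    gcongr
    exact hf x y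
  have hslice : ∀ z h, ∫⁻ x in Ω, G z x h ≤ 2 * ENNReal.ofReal (2 * R) ^ (n - 1) *
      ENNReal.ofReal (min 2 (‖h‖ / ε) ^ 2 / ‖h‖ ^ ((n : ℝ) + 2 * s) * (‖h‖ + ε)) := by
    intro z h
    have hS : MeasurableSet {x : EuclideanSpace ℝ (Fin n) | |x i - z| ≤ ‖h‖ + ε} :=
      measurableSet_le (by fun_prop) (by fun_prop)
    have hGe : (fun x => G z x h) =
        {x : EuclideanSpace ℝ (Fin n) | |x i - z| ≤ ‖h‖ + ε}.indicator fun _ => κ h := rfl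
    rw [hGe, lintegral_indicator_const hS, Measure.restrict_apply hS, inter_comm]
    calc κ h * volume (Ω ∩ {x : EuclideanSpace ℝ (Fin n) | |x i - z| ≤ ‖h‖ + ε})
        ≤ κ h * (ENNReal.ofReal (2 * R) ^ (n - 1) * ENNReal.ofReal (2 * (‖h‖ + ε))) := by
          gcongr
          exact (measure_mono (inter_subset_inter_left _ hR)).trans (volume_slab_le i R z _)
      _ = _ := by
          rw [ENNReal.ofReal_mul (q := ‖h‖ + ε) (by norm_num : (0 : ℝ) ≤ 2),
            ENNReal.ofReal_mul (q := ‖h‖ + ε) (by positivity), ENNReal.ofReal_ofNat]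
          ring
  have hC : 2 * ENNReal.ofReal (2 * R) ^ (n - 1) ≠ ∞ := by finiteness
  calc gagliardo n s Ω f
      ≤ ∫⁻ x in Ω, ∑ z ∈ Z, ∫⁻ h, G z x h := by
        refine setLIntegral_mono' hΩ fun x hx => ?_
        calc _ ≤ ∫⁻ y in Ω, ∑ z ∈ Z, G z x (y - x) :=
              setLIntegral_mono' hΩ fun y hy => hpt x hx y hy
          _ ≤ ∫⁻ y, ∑ z ∈ Z, G z x (y - x) := setLIntegral_le_lintegral _ _
          _ = ∑ z ∈ Z, ∫⁻ y, G z x (y - x) := lintegral_finsetSum _ fun z _ =>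
              (hG z).comp (measurable_const.prodMk (measurable_id.sub_const x))
          _ = _ := Finset.sum_congr rfl fun z _ => lintegral_sub_right_eq_self (G z x) x
    _ = ∑ z ∈ Z, ∫⁻ x in Ω, ∫⁻ h, G z x h :=
        lintegral_finsetSum _ fun z _ => (hG z).lintegral_prod_right
    _ = ∑ z ∈ Z, ∫⁻ h, ∫⁻ x in Ω, G z x h :=
        Finset.sum_congr rfl fun z _ => lintegral_lintegral_swap (hG z).aemeasurable
    _ ≤ ∑ z ∈ Z, ∫⁻ h : EuclideanSpace ℝ (Fin n), 2 * ENNReal.ofReal (2 * R) ^ (n - 1) *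
          ENNReal.ofReal (min 2 (‖h‖ / ε) ^ 2 / ‖h‖ ^ ((n : ℝ) + 2 * s) * (‖h‖ + ε)) :=
        Finset.sum_le_sum fun z _ => lintegral_mono (hslice z)
    _ = _ := by
        rw [Finset.sum_const, nsmul_eq_mul, lintegral_const_mul' _ _ hC]

/-- The potential energy of a transition layer of width `ε` is of order `ε`. -/
lemma potentialTerm_le_of_transition {n : ℕ} (i : Fin n) {Ω : Set (EuclideanSpace ℝ (Fin n))}
    (hΩ : MeasurableSet Ω) {R : ℝ} (hR : Ω ⊆ Metric.closedBall 0 R) {ε : ℝ} (Z : Finset ℝ)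
    {W : ℝ → ℝ} {M : ℝ} (f : EuclideanSpace ℝ (Fin n) → ℝ) (hM : ∀ x, W (f x) ≤ M)
    (hZ : ∀ x ∈ Ω, W (f x) ≠ 0 → ∃ z ∈ Z, |x i - z| ≤ ε) :
    potentialTerm n Ω W f ≤ Z.card * (ENNReal.ofReal M *
      (ENNReal.ofReal (2 * R) ^ (n - 1) * ENNReal.ofReal (2 * ε))) := by
  have hS : ∀ z, MeasurableSet {x : EuclideanSpace ℝ (Fin n) | |x i - z| ≤ ε} := fun z =>
    measurableSet_le (by fun_prop) (by fun_prop)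
  calc potentialTerm n Ω W f
      ≤ ∫⁻ x in Ω, ∑ z ∈ Z, {x : EuclideanSpace ℝ (Fin n) | |x i - z| ≤ ε}.indicator
          (fun _ => ENNReal.ofReal M) x := by
        refine setLIntegral_mono' hΩ fun x hx => ?_
        by_cases hW : W (f x) = 0
        · simp [hW]
        obtain ⟨z, hz, hxz⟩ := hZ x hx hW
        refine le_trans ?_ (Finset.single_le_sum (fun _ _ => zero_le) hz)
        have hmem : x ∈ {x : EuclideanSpace ℝ (Fin n) | |x i - z| ≤ ε} := hxz
        rw [indicator_of_mem hmem]
        exact ENNReal.ofReal_le_ofReal (hM x)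
    _ = ∑ z ∈ Z, ENNReal.ofReal M *
          volume (Ω ∩ {x : EuclideanSpace ℝ (Fin n) | |x i - z| ≤ ε}) := by
        rw [lintegral_finsetSum _ fun z _ => measurable_const.indicator (hS z)]
        refine Finset.sum_congr rfl fun z _ => ?_
        rw [lintegral_indicator_const (hS z), Measure.restrict_apply (hS z), inter_comm]
    _ ≤ ∑ z ∈ Z, ENNReal.ofReal M *
          (ENNReal.ofReal (2 * R) ^ (n - 1) * ENNReal.ofReal (2 * ε)) := by
        gcongr with z
        exact (measure_mono (inter_subset_inter_left _ hR)).trans (volume_slab_le i R z _)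
    _ = _ := by rw [Finset.sum_const, nsmul_eq_mul]

/-- for `s ∈ (1/2,1)`, a bound on `F_ε` over `S_ε^k`, uniform in `ε ∈ (0,1)`. -/
theorem energy_bound_on_Sset_large_s {n : ℕ} (hn : 0 < n) (s : ℝ)
    (hs : s ∈ Set.Ioo (1 / 2 : ℝ) 1)
    (Ω : Set (EuclideanSpace ℝ (Fin n))) (hΩo : IsOpen Ω) (hΩb : Bornology.IsBounded Ω)
    (W : ℝ → ℝ) (hW : IsDoubleWell W) (k : ℕ) :
    ∃ c : ℝ, 0 < c ∧ ∀ ε ∈ Set.Ioo (0 : ℝ) 1, ∀ f ∈ Sset n k hn ε,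
      ENNReal.ofReal (ε ^ (2 * s - 1) / 2) * gagliardo n s Ω f
          + ENNReal.ofReal (1 / ε) * potentialTerm n Ω W f
        ≤ ENNReal.ofReal c := by
  obtain ⟨R, hR0, hR⟩ := hΩb.subset_closedBall_lt 0 0
  obtain ⟨N, hN⟩ := exists_finset_zeros_cosPoly k (R + 1)
  obtain ⟨C, hC0, hC⟩ := exists_lintegral_kernel_le hn hs
  obtain ⟨hWc, -, -, hW1, hW2, -⟩ := hW
  obtain ⟨M, hM⟩ := isCompact_Icc.bddAbove_image
    (K := Icc (-1 : ℝ) 1) hWc.continuous.continuousOn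
  set V : ℝ≥0∞ := ENNReal.ofReal (2 * R) ^ (n - 1)
  have hVfin : V ≠ ∞ := by finiteness
  set B : ℝ≥0∞ := N * (2 * V * ENNReal.ofReal (C / 2)) + N * (ENNReal.ofReal M * (V * 2)) with hB
  have hBfin : B ≠ ∞ := by finiteness
  refine ⟨B.toReal + 1, by positivity, fun ε hε f hf => ?_⟩
  obtain ⟨hε0, hε1⟩ := hε
  obtain ⟨lam, hlam, hflam⟩ := hf
  obtain ⟨Z, hZN, hZ⟩ := hN lam (by rintro rfl; simp at hlam)
  have hZN' : (Z.card : ℝ≥0∞) ≤ N := by exact_mod_cast hZN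
  have hcoord : ∀ x ∈ Ω, |x ⟨0, hn⟩| ≤ R := fun x hx =>
    (PiLp.norm_apply_le x _).trans (mem_closedBall_zero_iff.1 (hR hx))
  have hfabs : ∀ x, |f x| ≤ 1 := fun x => by
    rw [hflam]; exact abs_Lavg_le_one k hε0 lam _
  have hdiff : ∀ x y : EuclideanSpace ℝ (Fin n), |x ⟨0, hn⟩ - y ⟨0, hn⟩| ≤ ‖y - x‖ := by
    intro x y
    rw [norm_sub_rev]
    exact PiLp.norm_apply_le (x - y) ⟨0, hn⟩
  have hgag := gagliardo_le_of_transition ⟨0, hn⟩ s hΩo.measurableSet hR (ε := ε) Z f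
    (fun x y => le_min ((abs_sub _ _).trans (by linarith [hfabs x, hfabs y])) (by
      rw [hflam, hflam]
      refine (abs_Lavg_sub_le k hε0 lam _ _).trans ?_
      gcongr
      exact hdiff x y))
    (fun x hx y hy hxy => by
      rw [hflam, hflam] at hxy
      obtain ⟨z, hz, hz0⟩ := exists_zero_of_Lavg_ne k hε0 lam hxy
      have hd := abs_le.1 (hdiff x y)
      have hx' := abs_le.1 (hcoord x hx)
      have hy' := abs_le.1 (hcoord y hy)
      have h1 : z ≤ x ⟨0, hn⟩ + ‖y - x‖ + ε :=
        hz.2.trans (by gcongr; exact max_le (by linarith [norm_nonneg (y - x)]) (by linarith))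
      have h2 : x ⟨0, hn⟩ - ‖y - x‖ - ε ≤ z :=
        le_trans (by gcongr; exact le_min (by linarith [norm_nonneg (y - x)]) (by linarith)) hz.1
      have h3 : z ≤ R + 1 := hz.2.trans (add_le_add (max_le hx'.2 hy'.2) hε1.le)
      have h4 : -(R + 1) ≤ z := by
        linarith [hz.1, le_min hx'.1 hy'.1]
      exact ⟨z, hZ z ⟨h4, h3⟩ hz0, abs_le.2 ⟨by linarith, by linarith⟩⟩)
  have hpot := potentialTerm_le_of_transition ⟨0, hn⟩ hΩo.measurableSet hR (ε := ε) Z (W := W)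
    (M := M) f (fun x => hM ⟨f x, abs_le.1 (hfabs x), rfl⟩)
    (fun x hx hWx => by
      obtain ⟨z, hz, hz0⟩ := exists_zero_of_abs_Lavg_ne_one k hε0 lam (a := x ⟨0, hn⟩)
        (fun h => hWx (by rw [hflam, h, hW1])) (fun h => hWx (by rw [hflam, h, hW2]))
      have hx' := abs_le.1 (hcoord x hx)
      exact ⟨z, hZ z ⟨by linarith [hz.1], by linarith [hz.2]⟩ hz0,
        abs_le.2 ⟨by linarith [hz.2], by linarith [hz.1]⟩⟩)
  have hscale : ENNReal.ofReal (ε ^ (2 * s - 1) / 2) * ENNReal.ofReal (C * ε ^ (1 - 2 * s))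
      = ENNReal.ofReal (C / 2) := by
    rw [← ENNReal.ofReal_mul (by positivity)]
    congr 1
    have : ε ^ (2 * s - 1) * ε ^ (1 - 2 * s) = 1 := by
      rw [← rpow_add hε0]; simp
    linear_combination C / 2 * this
  have hscale' : ENNReal.ofReal (1 / ε) * ENNReal.ofReal (2 * ε) = 2 := by
    rw [← ENNReal.ofReal_mul (by positivity), show 1 / ε * (2 * ε) = 2 by field_simp]
    simp
  calc _ ≤ ENNReal.ofReal (ε ^ (2 * s - 1) / 2) *
          (N * (2 * V * ENNReal.ofReal (C * ε ^ (1 - 2 * s))))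
        + ENNReal.ofReal (1 / ε) * (N * (ENNReal.ofReal M * (V * ENNReal.ofReal (2 * ε)))) := by
        gcongr
        · refine hgag.trans ?_
          gcongr
          exact hC ε hε0
        · refine hpot.trans ?_
          gcongr
    _ = B := by
        rw [hB, ← hscale, ← hscale']
        ring
    _ = ENNReal.ofReal B.toReal := (ENNReal.ofReal_toReal hBfin).symm
    _ ≤ _ := ENNReal.ofReal_le_ofReal (by linarith)
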